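/- Let A be a commutative Noetherian ring and let U be an open subset of Spec A containing every associated prime of A (regarded as points of Spec A). Then there exists a non-zerodivisor x ∈ A such that the basic open set D(x) is contained in U. -/

import Mathlib

/-!
The closed complement of `U` is `V(I)` for an ideal `I` contained in none of the finitely many
associated primes. By prime avoidance some `x ∈ I` lies outside all of them; such an `x` is a
non-zerodivisor, and `x ∈ I` gives `D(x) ⊆ U`.
-/

theorem exists_subset_basicOpen_le_of_finite {A : Type*} [CommRing A]
    {s : Set (PrimeSpectrum A)} (hs : s.Finite) {U : TopologicalSpace.Opens (PrimeSpectrum A)}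
    (hsU : s ⊆ U) :
    ∃ x : A, s ⊆ PrimeSpectrum.basicOpen x ∧ PrimeSpectrum.basicOpen x ≤ U := by
  obtain ⟨I, hI⟩ := (PrimeSpectrum.isClosed_iff_zeroLocus_ideal _).1 U.isOpen.isClosed_compl
  have not_le_of_mem : ∀ p ∈ s, ¬ I ≤ p.asIdeal := fun p hp hIp =>
    (hI.ge hIp : p ∈ (U : Set (PrimeSpectrum A))ᶜ) (hsU hp)
  have not_subset_iUnion : ¬ (I : Set A) ⊆ ⋃ p ∈ s, (p.asIdeal : Set A) := fun hIs => by
    -- `q` only fills the two slots for ideals that prime avoidance allows not to be prime.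
    obtain ⟨q, -, -⟩ := Set.mem_iUnion₂.1 (hIs I.zero_mem)
    obtain ⟨p, hp, hIp⟩ :=
      (Ideal.subset_union_prime_finite hs q q fun p _ _ _ => p.isPrime).1 hIs
    exact not_le_of_mem p hp hIp
  obtain ⟨x, hxI, hxs⟩ := Set.not_subset.1 not_subset_iUnion
  refine ⟨x, fun p hp hxp => hxs (Set.mem_biUnion hp hxp), fun p hxp => ?_⟩
  by_contra hpU
  exact hxp (hI.le hpU hxI)

theorem isSMulRegular_iff_forall_notMem_associatedPrimes {A M : Type*} [CommRing A]
    [IsNoetherianRing A] [AddCommGroup M] [Module A M] {x : A} :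
    IsSMulRegular M x ↔ ∀ p ∈ associatedPrimes A M, x ∉ p := by
  have mem_iUnion_iff := Set.ext_iff.1 (biUnion_associatedPrimes_eq_compl_regular A M) x
  simpa using mem_iUnion_iff.not.symm

theorem exists_nonZeroDivisor_basicOpen_le_general {A M : Type*} [CommRing A]
    [IsNoetherianRing A] [AddCommGroup M] [Module A M] (hM : (associatedPrimes A M).Finite)
    (U : TopologicalSpace.Opens (PrimeSpectrum A))
    (hU : ∀ p : PrimeSpectrum A, p.asIdeal ∈ associatedPrimes A M → p ∈ U) :
    ∃ x : A, IsSMulRegular M x ∧ PrimeSpectrum.basicOpen x ≤ U := by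
  have finite_points : (PrimeSpectrum.asIdeal ⁻¹' associatedPrimes A M).Finite :=
    hM.preimage fun _ _ _ _ => PrimeSpectrum.ext
  obtain ⟨x, hx, hxU⟩ := exists_subset_basicOpen_le_of_finite finite_points hU
  refine ⟨x, isSMulRegular_iff_forall_notMem_associatedPrimes.2 fun p hp => ?_, hxU⟩
  exact @hx ⟨p, hp.isPrime⟩ hp

/-- Let `A` be a commutative Noetherian ring and `U ⊆ Spec A` an open set containing every
associated prime of `A`. Then there is a non-zerodivisor `x ∈ A` with `D(x) ⊆ U`. -/
theorem exists_nonZeroDivisor_basicOpen_le {A : Type*} [CommRing A] [IsNoetherianRing A]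
    (U : TopologicalSpace.Opens (PrimeSpectrum A))
    (hU : ∀ p : PrimeSpectrum A, p.asIdeal ∈ associatedPrimes A A → p ∈ U) :
    ∃ x ∈ nonZeroDivisors A, PrimeSpectrum.basicOpen x ≤ U := by
  obtain ⟨x, hx, hxU⟩ :=
    exists_nonZeroDivisor_basicOpen_le_general (associatedPrimes.finite A A) U hU
  exact ⟨x, mem_nonZeroDivisors_iff_left.2 fun _ => hx.right_eq_zero_of_smul, hxU⟩
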